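/- Let G1 and G2 be connected simple graphs with globally bounded vertex degree that are quasi-isometric with respect to their graph metrics. Then for any reference vertices x1 of G1 and x2 of G2 the upper internal scaling dimensions coincide: limsup_{r→∞} ln β_{G1}(x1,r)/ln r = limsup_{r→∞} ln β_{G2}(x2,r)/ln r, and likewise the lower internal scaling dimensions (with liminf in place of limsup) coincide. -/

import Mathlib

open Filter

/-- The growth function of a graph: the number of vertices at graph distance at most `k`
from `x`. -/
noncomputable def graphGrowth {V : Type*} (G : SimpleGraph V) (x : V) (k : ℕ) : ℕ :=
  Set.ncard {y : V | G.dist x y ≤ k}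

theorem aux_ball {V : Type*} (G : SimpleGraph V) (hc : G.Connected) (v : ℕ)
    (hdeg : ∀ x : V, (G.neighborSet x).Finite ∧ (G.neighborSet x).ncard ≤ v) (k : ℕ) :
    ∃ M : ℕ, ∀ x : V, {y : V | G.dist x y ≤ k}.Finite ∧ {y : V | G.dist x y ≤ k}.ncard ≤ M := by
  classical
  induction k with
  | zero =>
    refine ⟨1, fun x => ?_⟩
    have : {y : V | G.dist x y ≤ 0} = {x} := by
      ext y
      simp only [Set.mem_ofPred_eq, Nat.le_zero, Set.mem_singleton_iff]
      rw [hc.dist_eq_zero_iff]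
      exact eq_comm
    rw [this]
    simp
  | succ k ih =>
    obtain ⟨M, hM⟩ := ih
    refine ⟨M + v * M, fun x => ?_⟩
    have hf : ∀ z : V, {y : V | G.dist z y ≤ k}.Finite := fun z => (hM z).1
    have hsub : {y : V | G.dist x y ≤ k + 1} ⊆
        ((hf x).toFinset ∪ (hf x).toFinset.biUnion (fun z => (hdeg z).1.toFinset) : Finset V) := by
      intro y hy
      simp only [Set.mem_ofPred_eq] at hy
      simp only [Finset.coe_union, Set.mem_union, Finset.mem_coe, Set.Finite.mem_toFinset,
        Set.mem_ofPred_eq, Finset.mem_biUnion, SimpleGraph.mem_neighborSet]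
      by_cases h : G.dist x y ≤ k
      · exact Or.inl h
      · right
        obtain ⟨p, hp⟩ := hc.exists_walk_length_eq_dist y x
        cases p with
        | nil => simp at h
        | cons hadj q =>
          rename_i z
          refine ⟨z, ?_, hadj.symm⟩
          have h1 := SimpleGraph.dist_le q
          rw [SimpleGraph.Walk.length_cons, SimpleGraph.dist_comm] at hp
          rw [SimpleGraph.dist_comm]
          omega
    refine ⟨(Finset.finite_toSet _).subset hsub, ?_⟩
    refine (Set.ncard_le_ncard hsub (Finset.finite_toSet _)).trans ?_
    rw [Set.ncard_coe_finset]
    refine (Finset.card_union_le _ _).trans ?_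
    have hx : (hf x).toFinset.card ≤ M := by
      rw [← Set.ncard_eq_toFinset_card _ (hf x)]; exact (hM x).2
    have h2 := Finset.card_biUnion_le_card_mul (hf x).toFinset
      (fun z => (hdeg z).1.toFinset) v (fun z _ => by
        rw [← Set.ncard_eq_toFinset_card _ (hdeg z).1]; exact (hdeg z).2)
    nlinarith

theorem aux_growth {V W : Type*} (G : SimpleGraph V) (G' : SimpleGraph W)
    (hc : G.Connected) (hc' : G'.Connected) (v : ℕ)
    (hdeg : ∀ x : V, (G.neighborSet x).Finite ∧ (G.neighborSet x).ncard ≤ v)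
    (hdeg' : ∀ x : W, (G'.neighborSet x).Finite ∧ (G'.neighborSet x).ncard ≤ v)
    (H : V → W) (x : V) (x' : W) (A B D : ℝ)
    (hA : 0 ≤ A) (hB : 0 ≤ B)
    (hD : ∀ y z, H y = H z → (G.dist y z : ℝ) ≤ D)
    (hH : ∀ y, (G'.dist x' (H y) : ℝ) ≤ A * G.dist x y + B) :
    ∃ C K : ℕ, 1 ≤ C ∧ 1 ≤ K ∧ ∀ r : ℕ, 1 ≤ r → graphGrowth G x r ≤ C * graphGrowth G' x' (K * r) := by
  classical
  obtain ⟨M, hM⟩ := aux_ball G hc v hdeg ⌊D⌋₊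
  refine ⟨M + 1, ⌈A⌉₊ + ⌈B⌉₊ + 1, by omega, by omega, fun r hr => ?_⟩
  obtain ⟨M1, hM1⟩ := aux_ball G hc v hdeg r
  obtain ⟨M2, hM2⟩ := aux_ball G' hc' v hdeg' ((⌈A⌉₊ + ⌈B⌉₊ + 1) * r)
  unfold graphGrowth
  rw [Set.ncard_eq_toFinset_card _ (hM1 x).1, Set.ncard_eq_toFinset_card _ (hM2 x').1]
  refine Finset.card_le_mul_card_image_of_maps_to (f := H) ?_ _ ?_
  · intro y hy
    simp only [Set.Finite.coe_toFinset, Set.Finite.mem_toFinset, Set.mem_ofPred_eq] at hy ⊢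
    have h1 := hH y
    have h2 : (G.dist x y : ℝ) ≤ r := by exact_mod_cast hy
    have h3 := Nat.le_ceil A
    have h4 := Nat.le_ceil B
    have hr' : (1 : ℝ) ≤ r := by exact_mod_cast hr
    have : (G'.dist x' (H y) : ℝ) ≤ (((⌈A⌉₊ + ⌈B⌉₊ + 1) * r : ℕ) : ℝ) := by
      push_cast
      have e1 : A * G.dist x y ≤ ⌈A⌉₊ * r := by gcongr
      have e2 : (⌈B⌉₊ : ℝ) ≤ ⌈B⌉₊ * r := le_mul_of_one_le_right (by positivity) hr'
      nlinarith
    exact_mod_cast this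
  · intro b _
    by_cases hne : ∃ a, H a = b
    · obtain ⟨a, ha⟩ := hne
      have hsub : (Finset.filter (fun y => H y = b) (hM1 x).1.toFinset) ⊆ (hM a).1.toFinset := by
        intro y hy
        simp only [Finset.mem_filter, Set.Finite.mem_toFinset, Set.mem_ofPred_eq] at hy ⊢
        exact Nat.le_floor (hD a y (ha.trans hy.2.symm))
      have := Finset.card_le_card hsub
      rw [← Set.ncard_eq_toFinset_card _ (hM a).1] at this
      have := (hM a).2
      omega
    · push Not at hne
      rw [Finset.filter_false_of_mem (fun y _ => hne y)]
      simp

theorem aux_growth_pos {V : Type*} (G : SimpleGraph V) (hc : G.Connected) (v : ℕ)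
    (hdeg : ∀ x : V, (G.neighborSet x).Finite ∧ (G.neighborSet x).ncard ≤ v) (x : V) (k : ℕ) :
    1 ≤ graphGrowth G x k := by
  obtain ⟨M, hM⟩ := aux_ball G hc v hdeg k
  unfold graphGrowth
  exact (Set.ncard_pos (hM x).1).2 ⟨x, by simp⟩

theorem aux_growth_mono {V : Type*} (G : SimpleGraph V) (hc : G.Connected) (v : ℕ)
    (hdeg : ∀ x : V, (G.neighborSet x).Finite ∧ (G.neighborSet x).ncard ≤ v) (x : V) :
    Monotone (graphGrowth G x) := by
  intro k l hkl
  obtain ⟨M, hM⟩ := aux_ball G hc v hdeg l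
  exact Set.ncard_le_ncard (fun y hy => le_trans hy hkl) (hM x).1

theorem aux_sSup (S T : Set ℝ) (h1 : ∀ a ∈ S, ∀ δ > 0, a - δ ∈ T)
    (h2 : ∀ a ∈ T, ∀ δ > 0, a - δ ∈ S) : sSup S = sSup T := by
  have key : ∀ S T : Set ℝ, (∀ a ∈ S, ∀ δ > 0, a - δ ∈ T) → upperBounds T ⊆ upperBounds S := by
    intro S T h u hu a ha
    refine le_of_forall_pos_le_add fun δ hδ => ?_
    have := hu (h a ha δ hδ)
    linarith
  have hub : upperBounds S = upperBounds T := (key T S h2).antisymm (key S T h1)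
  by_cases hS : S.Nonempty ∧ BddAbove S
  · have hT : T.Nonempty ∧ BddAbove T := by
      refine ⟨?_, ?_⟩
      · obtain ⟨a, ha⟩ := hS.1
        exact ⟨_, h1 a ha 1 one_pos⟩
      · unfold BddAbove; rw [← hub]; exact hS.2
    have e1 := isLUB_csSup hS.1 hS.2
    have e2 := isLUB_csSup hT.1 hT.2
    unfold IsLUB at e1 e2
    rw [hub] at e1
    exact e1.unique e2
  · by_cases hSn : S.Nonempty
    · have hb : ¬ BddAbove S := fun h => hS ⟨hSn, h⟩
      have hb' : ¬ BddAbove T := by unfold BddAbove; rw [← hub]; exact hb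
      rw [Real.sSup_of_not_bddAbove hb, Real.sSup_of_not_bddAbove hb']
    · have hTn : ¬ T.Nonempty := by
        rintro ⟨a, ha⟩; exact hSn ⟨_, h2 a ha 1 one_pos⟩
      rw [Set.not_nonempty_iff_eq_empty] at hSn hTn
      rw [hSn, hTn]

theorem aux_sInf (S T : Set ℝ) (h1 : ∀ a ∈ S, ∀ δ > 0, a + δ ∈ T)
    (h2 : ∀ a ∈ T, ∀ δ > 0, a + δ ∈ S) : sInf S = sInf T := by
  rw [Real.sInf_def, Real.sInf_def]
  congr 1
  apply aux_sSup
  · intro a ha δ hδ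
    have := h1 _ (Set.mem_neg.1 ha) δ hδ
    rw [Set.mem_neg]; convert this using 1; ring
  · intro a ha δ hδ
    have := h2 _ (Set.mem_neg.1 ha) δ hδ
    rw [Set.mem_neg]; convert this using 1; ring

theorem aux_log_large (c δ : ℝ) (hδ : 0 < δ) : ∀ᶠ r : ℕ in atTop, c ≤ δ * Real.log r := by
  have h : Tendsto (fun r : ℕ => δ * Real.log r) atTop atTop :=
    (Real.tendsto_log_atTop.comp tendsto_natCast_atTop_atTop).const_mul_atTop hδ
  exact h.eventually_ge_atTop c

theorem aux_upper (b c : ℕ → ℕ) (hb : ∀ k, 1 ≤ b k) (hc : ∀ k, 1 ≤ c k)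
    (C K : ℕ) (hC : 1 ≤ C) (hK : 1 ≤ K) (h : ∀ r, 1 ≤ r → b r ≤ C * c (K * r))
    (a : ℝ) (ha : ∀ᶠ r : ℕ in atTop, Real.log (c r) / Real.log r ≤ a) (δ : ℝ) (hδ : 0 < δ) :
    ∀ᶠ r : ℕ in atTop, Real.log (b r) / Real.log r ≤ a + δ := by
  have hKt : Tendsto (fun r : ℕ => K * r) atTop atTop :=
    tendsto_id.const_mul_atTop' (by omega)
  filter_upwards [hKt.eventually ha, aux_log_large (Real.log C + a * Real.log K) δ hδ,
    eventually_ge_atTop 2] with r h1 h2 hr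
  have hr2 : (2 : ℝ) ≤ r := by exact_mod_cast hr
  have hK1 : (1 : ℝ) ≤ K := by exact_mod_cast hK
  have hC1 : (1 : ℝ) ≤ C := by exact_mod_cast hC
  have hlr : 0 < Real.log r := Real.log_pos (by linarith)
  have hlK : 0 ≤ Real.log K := Real.log_nonneg hK1
  rw [div_le_iff₀ hlr]
  have e : Real.log ((K * r : ℕ) : ℝ) = Real.log K + Real.log r := by
    push_cast
    exact Real.log_mul (by positivity) (by positivity)
  rw [e, div_le_iff₀ (by linarith)] at h1
  have hcp : (1 : ℝ) ≤ c (K * r) := by exact_mod_cast hc _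
  have hbp : (1 : ℝ) ≤ b r := by exact_mod_cast hb _
  have h3 : (b r : ℝ) ≤ C * c (K * r) := by exact_mod_cast h r (by omega)
  have h4 := Real.log_le_log (by linarith) h3
  rw [Real.log_mul (by positivity) (by positivity)] at h4
  nlinarith

theorem aux_lower (b c : ℕ → ℕ) (hb : ∀ k, 1 ≤ b k) (hc : ∀ k, 1 ≤ c k) (hmono : Monotone b)
    (C K : ℕ) (hC : 1 ≤ C) (hK : 1 ≤ K) (h : ∀ r, 1 ≤ r → c r ≤ C * b (K * r))
    (a : ℝ) (ha : ∀ᶠ r : ℕ in atTop, a ≤ Real.log (c r) / Real.log r) (δ : ℝ) (hδ : 0 < δ) :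
    ∀ᶠ r : ℕ in atTop, a - δ ≤ Real.log (b r) / Real.log r := by
  rcases le_or_gt a 0 with ha0 | ha0
  · filter_upwards with r
    have : 0 ≤ Real.log (b r) / Real.log r :=
      div_nonneg (Real.log_natCast_nonneg _) (Real.log_natCast_nonneg _)
    linarith
  have hKt : Tendsto (fun r : ℕ => r / K) atTop atTop :=
    Nat.tendsto_div_const_atTop (by omega)
  filter_upwards [hKt.eventually ha, aux_log_large (Real.log C + a * Real.log (2 * K)) δ hδ,
    hKt.eventually_ge_atTop 2, eventually_ge_atTop 2] with r h1 h2 hs hr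
  set s := r / K with hsdef
  have hr2 : (2 : ℝ) ≤ r := by exact_mod_cast hr
  have hs2 : (2 : ℝ) ≤ s := by exact_mod_cast hs
  have hK1 : (1 : ℝ) ≤ K := by exact_mod_cast hK
  have hC1 : (1 : ℝ) ≤ C := by exact_mod_cast hC
  have hlr : 0 < Real.log r := Real.log_pos (by linarith)
  have hls : 0 < Real.log s := Real.log_pos (by linarith)
  rw [le_div_iff₀ hlr]
  rw [le_div_iff₀ hls] at h1
  have hKs : K * s ≤ r := Nat.mul_div_le r K
  have hr3 : r ≤ 2 * K * s := by
    have := Nat.lt_mul_div_succ r (show 0 < K by omega)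
    rw [← hsdef] at this
    nlinarith
  have hr4 : (r : ℝ) ≤ 2 * K * s := by exact_mod_cast hr3
  have h5 := Real.log_le_log (by linarith) hr4
  rw [Real.log_mul (by positivity) (by positivity)] at h5
  have hcp : (1 : ℝ) ≤ c s := by exact_mod_cast hc _
  have hbp : (1 : ℝ) ≤ b r := by exact_mod_cast hb _
  have h3 : (c s : ℝ) ≤ C * b r := by
    exact_mod_cast (h s (by omega)).trans (Nat.mul_le_mul_left _ (hmono hKs))
  have h4 := Real.log_le_log (by linarith) h3
  rw [Real.log_mul (by positivity) (by positivity)] at h4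
  nlinarith

/-- Quasi-isometric connected graphs of globally bounded vertex degree have the same upper
and the same lower internal scaling dimension, for any choice of reference vertices. -/
theorem scalingDimension_eq_of_quasiIsometric
    {V₁ V₂ : Type*} (G₁ : SimpleGraph V₁) (G₂ : SimpleGraph V₂)
    (hconn₁ : G₁.Connected) (hconn₂ : G₂.Connected)
    (v : ℕ)
    (hdeg₁ : ∀ x : V₁, (G₁.neighborSet x).Finite ∧ (G₁.neighborSet x).ncard ≤ v)
    (hdeg₂ : ∀ y : V₂, (G₂.neighborSet y).Finite ∧ (G₂.neighborSet y).ncard ≤ v)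
    (F : V₁ → V₂) (lam ε ε' : ℝ) (hlam : 1 ≤ lam) (hε : 0 ≤ ε) (hε' : 0 ≤ ε')
    (hqie : ∀ x y : V₁,
      lam⁻¹ * (G₁.dist x y : ℝ) - ε ≤ (G₂.dist (F x) (F y) : ℝ) ∧
      (G₂.dist (F x) (F y) : ℝ) ≤ lam * (G₁.dist x y : ℝ) + ε)
    (hdense : ∀ y : V₂, ∃ x : V₁, (G₂.dist (F x) y : ℝ) ≤ ε')
    (x₁ : V₁) (x₂ : V₂) :
    limsup (fun r : ℕ => Real.log (graphGrowth G₁ x₁ r) / Real.log r) atTop =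
      limsup (fun r : ℕ => Real.log (graphGrowth G₂ x₂ r) / Real.log r) atTop ∧
    liminf (fun r : ℕ => Real.log (graphGrowth G₁ x₁ r) / Real.log r) atTop =
      liminf (fun r : ℕ => Real.log (graphGrowth G₂ x₂ r) / Real.log r) atTop := by
  have hl0 : 0 < lam := by linarith
  have tri₂ : ∀ x y z : V₂, (G₂.dist x z : ℝ) ≤ G₂.dist x y + G₂.dist y z := fun x y z => by
    exact_mod_cast hconn₂.dist_triangle
  have low : ∀ x y : V₁, (G₁.dist x y : ℝ) ≤ lam * (G₂.dist (F x) (F y) + ε) := fun x y => by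
    have := (hqie x y).1
    have h2 : lam⁻¹ * (G₁.dist x y : ℝ) ≤ G₂.dist (F x) (F y) + ε := by linarith
    rwa [inv_mul_le_iff₀ hl0] at h2
  obtain ⟨C, K, hC, hK, h12⟩ := aux_growth G₁ G₂ hconn₁ hconn₂ v hdeg₁ hdeg₂ F x₁ x₂
    lam (ε + G₂.dist x₂ (F x₁)) (lam * ε) hl0.le (by positivity)
    (fun y z hyz => by
      have := low y z
      rw [hyz] at this
      simpa using this)
    (fun y => by
      have := (hqie x₁ y).2
      have := tri₂ x₂ (F x₁) (F y)
      linarith)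
  choose H hH using hdense
  obtain ⟨C', K', hC', hK', h21⟩ := aux_growth G₂ G₁ hconn₂ hconn₁ v hdeg₂ hdeg₁ H x₂ x₁
    lam (lam * (G₂.dist (F x₁) x₂ + ε' + ε)) (2 * ε') hl0.le (by positivity)
    (fun y z hyz => by
      have h1 := hH y
      have h2 := hH z
      rw [hyz, SimpleGraph.dist_comm] at h1
      have := tri₂ y (F (H z)) z
      linarith)
    (fun y => by
      have h1 := low x₁ (H y)
      have h2 := tri₂ (F x₁) x₂ (F (H y))
      have h3 := tri₂ x₂ y (F (H y))
      have h4 := hH y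
      rw [SimpleGraph.dist_comm] at h4
      have h5 : lam * (G₂.dist (F x₁) (F (H y)) + ε) ≤
        lam * ((G₂.dist (F x₁) x₂ + (G₂.dist x₂ y + ε')) + ε) := by gcongr; linarith
      linarith)
  have p1 := aux_growth_pos G₁ hconn₁ v hdeg₁ x₁
  have p2 := aux_growth_pos G₂ hconn₂ v hdeg₂ x₂
  have m1 := aux_growth_mono G₁ hconn₁ v hdeg₁ x₁
  have m2 := aux_growth_mono G₂ hconn₂ v hdeg₂ x₂
  constructor
  · rw [limsup_eq, limsup_eq]
    exact aux_sInf _ _ (fun a ha δ hδ => aux_upper _ _ p2 p1 C' K' hC' hK' h21 a ha δ hδ)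
      (fun a ha δ hδ => aux_upper _ _ p1 p2 C K hC hK h12 a ha δ hδ)
  · rw [liminf_eq, liminf_eq]
    exact aux_sSup _ _ (fun a ha δ hδ => aux_lower _ _ p2 p1 m2 C K hC hK h12 a ha δ hδ)
      (fun a ha δ hδ => aux_lower _ _ p1 p2 m1 C' K' hC' hK' h21 a ha δ hδ)
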